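/- Let (p_n) be a sequence of integers with p_n ≥ 2 for all n and p_n → ∞, let (κ_n) be a sequence in (0,∞), and for each n let θ_{n0} be a unit vector in ℝ^{p_n}. For each n let X_{n1},…,X_{nn} be i.i.d. random vectors with distribution FvML_{p_n}(θ_{n0},κ_n), set V_{ni}² := 1 − (X_{ni}'θ_{n0})² and L_n := (1/(n f₂(p_n,κ_n))) Σ_{i=1}^{n} V_{ni}². Then p_n · E[(L_n − 1)²] → 0 as n → ∞, where the expectation is taken under the n-fold product of FvML_{p_n}(θ_{n0},κ_n). -/

import Mathlib

open MeasureTheory Metric intervalIntegral Filter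
open scoped RealInnerProductSpace

/-- The surface-area measure on the unit sphere of `ℝ^p`. -/
noncomputable def sphereSurface (p : ℕ) :
    Measure (sphere (0 : EuclideanSpace ℝ (Fin p)) 1) :=
  (volume : Measure (EuclideanSpace ℝ (Fin p))).toSphere

/-- The Fisher–von Mises–Langevin distribution `FvML_p(θ,κ)`: the probability measure on
the unit sphere with density `x => exp(κ x'θ) / ∫ exp(κ y'θ) dσ(y)` with respect to the
surface-area measure `σ`. -/
noncomputable def fvml (p : ℕ) (θ : EuclideanSpace ℝ (Fin p)) (κ : ℝ) :
    Measure (sphere (0 : EuclideanSpace ℝ (Fin p)) 1) :=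
  (sphereSurface p).withDensity fun x =>
    ENNReal.ofReal (Real.exp (κ * ⟪(x : EuclideanSpace ℝ (Fin p)), θ⟫) /
      ∫ y : sphere (0 : EuclideanSpace ℝ (Fin p)) 1,
        Real.exp (κ * ⟪(y : EuclideanSpace ℝ (Fin p)), θ⟫) ∂(sphereSurface p))

/-- `mInt p κ ℓ = ∫_{-1}^1 u^ℓ (1-u²)^{(p-3)/2} exp(κ u) du`. -/
noncomputable def mInt (p : ℕ) (κ : ℝ) (ℓ : ℕ) : ℝ :=
  ∫ u in (-1 : ℝ)..1, u ^ ℓ * (1 - u ^ 2) ^ (((p : ℝ) - 3) / 2) * Real.exp (κ * u)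

/-- `e₂(p,κ) = E[U²]` under `FvML_p(θ,κ)`. -/
noncomputable def e2 (p : ℕ) (κ : ℝ) : ℝ := mInt p κ 2 / mInt p κ 0

/-- `f₂(p,κ) = E[1-U²]` under `FvML_p(θ,κ)`. -/
noncomputable def f2 (p : ℕ) (κ : ℝ) : ℝ := 1 - e2 p κ

/-!
Under `FvML_p(θ,κ)` the coordinate `U = X'θ` has density proportional to
`(1 - u²)^((p - 3) / 2) exp(κ u)` on `(-1, 1)`, and integration by parts against this density
gives linear relations between the moments of `U`, `V = 1 - U²` and `V²`. They reduce the bound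
`Var V ≤ 2 (E V)² / (p - 1)` to `κ E[U] E[U²] ≤ κ E[U³]`. The latter holds for every tilted
symmetric law: `E[f(U) (1 - tanh(κ U))] = 0` for odd `f` turns `κ U` into the even function
`κ U tanh(κ U)`, which is nondecreasing in `|U|` and so positively correlated with `U²`. The mean
square error of the mean of `n` copies of `V / E V` is `Var V / (n (E V)²)`, whence the bound
`4 / n` for its product with `p`.
-/

lemma lintegral_comp_inv_norm_smul_mul_comp_norm {E : Type*} [NormedAddCommGroup E]
    [NormedSpace ℝ E] [FiniteDimensional ℝ E] [Nontrivial E] [MeasurableSpace E] [BorelSpace E]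
    (μ : Measure E) [μ.IsAddHaarMeasure] {f : E → ENNReal} (hf : Measurable f)
    {g : ℝ → ENNReal} (hg : Measurable g) :
    ∫⁻ x, f (‖x‖⁻¹ • x) * g ‖x‖ ∂μ = (∫⁻ s : sphere (0 : E) 1, f s ∂μ.toSphere) *
      ∫⁻ r in Set.Ioi 0, ENNReal.ofReal (r ^ (Module.finrank ℝ E - 1)) * g r := by
  have hf' : Measurable fun s : sphere (0 : E) 1 => f s := hf.comp measurable_subtype_coe
  have hg' : Measurable fun r : Set.Ioi (0 : ℝ) => g r := hg.comp measurable_subtype_coe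
  calc
    _ = ∫⁻ x : ({(0)}ᶜ : Set E), f (‖x.1‖⁻¹ • x.1) * g ‖x.1‖ ∂(μ.comap (↑)) := by
      rw [lintegral_subtype_comap (measurableSet_singleton _).compl
        fun x => f (‖x‖⁻¹ • x) * g ‖x‖, restrict_compl_singleton]
    _ = ∫⁻ x, f x.1 * g x.2 ∂μ.toSphere.prod (.volumeIoiPow (Module.finrank ℝ E - 1)) := by
      rw [← μ.measurePreserving_homeomorphUnitSphereProd.lintegral_comp_emb
        (Homeomorph.measurableEmbedding _)]
      simp
    _ = (∫⁻ s : sphere (0 : E) 1, f s ∂μ.toSphere) *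
        ∫⁻ r : Set.Ioi (0 : ℝ), g r ∂.volumeIoiPow (Module.finrank ℝ E - 1) :=
      lintegral_prod_mul hf'.aemeasurable hg'.aemeasurable
    _ = _ := by
      rw [Measure.volumeIoiPow, lintegral_withDensity_eq_lintegral_mul _ (by fun_prop) hg']
      congr 1
      exact lintegral_subtype_comap measurableSet_Ioi
        fun r => ENNReal.ofReal (r ^ (Module.finrank ℝ E - 1)) * g r

section OrthogonalCoordinates

variable {E : Type*} [NormedAddCommGroup E] [InnerProductSpace ℝ E] [FiniteDimensional ℝ E]
  [MeasurableSpace E] [BorelSpace E]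

lemma measurePreserving_smul_add_orthogonal {θ : E} (hθ : ‖θ‖ = 1) :
    MeasurePreserving fun z : ℝ × (ℝ ∙ θ)ᗮ => z.1 • θ + (z.2 : E) :=
  (ℝ ∙ θ).orthogonalDecomposition.symm.measurePreserving.comp
    ((WithLp.volume_preserving_toLp _ _).comp
      ((LinearIsometryEquiv.toSpanUnitSingleton θ hθ).measurePreserving.prod
        (MeasurePreserving.id volume)))

lemma lintegral_comp_inner_norm {θ : E} (hθ : ‖θ‖ = 1) {f : ℝ → ℝ → ENNReal}
    (hf : Measurable (Function.uncurry f)) :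
    ∫⁻ x : E, f ⟪x, θ⟫ ‖x‖ = ∫⁻ t : ℝ, ∫⁻ y : (ℝ ∙ θ)ᗮ, f t √(t ^ 2 + ‖y‖ ^ 2) := by
  have orth (y : (ℝ ∙ θ)ᗮ) : ⟪(y : E), θ⟫ = 0 :=
    Submodule.mem_orthogonal_singleton_iff_inner_left.1 y.2
  have hinner (z : ℝ × (ℝ ∙ θ)ᗮ) : ⟪z.1 • θ + (z.2 : E), θ⟫ = z.1 := by
    simp [inner_add_left, orth, inner_smul_left, hθ]
  have hnorm (z : ℝ × (ℝ ∙ θ)ᗮ) : ‖z.1 • θ + (z.2 : E)‖ = √(z.1 ^ 2 + ‖z.2‖ ^ 2) := by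
    rw [← Real.sqrt_sq (norm_nonneg (_ + _)), norm_add_sq_real, inner_smul_left,
      real_inner_comm, orth]
    simp [norm_smul, hθ]
  have hf' : Measurable fun x : E => f ⟪x, θ⟫ ‖x‖ :=
    hf.comp (measurable_id.inner_const.prodMk measurable_norm)
  rw [← (measurePreserving_smul_add_orthogonal hθ).lintegral_comp hf']
  simp only [hinner, hnorm]
  rw [Measure.volume_eq_prod, lintegral_prod]
  exact (hf.comp (by fun_prop : Measurable fun z : ℝ × (ℝ ∙ θ)ᗮ =>
    (z.1, √(z.1 ^ 2 + ‖z.2‖ ^ 2)))).aemeasurable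

end OrthogonalCoordinates

lemma lintegral_upperHalfPlane_comp_polarCoord_symm {f : ℝ × ℝ → ENNReal} (hf : Measurable f) :
    ∫⁻ t : ℝ, ∫⁻ s in Set.Ioi 0, f (t, s) =
      ∫⁻ r in Set.Ioi 0, ∫⁻ φ in Set.Ioo 0 Real.pi,
        ENNReal.ofReal r * f (r * Real.cos φ, r * Real.sin φ) := by
  have hU : MeasurableSet (Prod.snd ⁻¹' Set.Ioi 0 : Set (ℝ × ℝ)) :=
    measurable_snd measurableSet_Ioi
  have hS : MeasurableSet (Set.Ioi 0 ×ˢ Set.Ioo 0 Real.pi : Set (ℝ × ℝ)) :=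
    measurableSet_Ioi.prod measurableSet_Ioo
  have hsub : Set.Ioi 0 ×ˢ Set.Ioo 0 Real.pi ⊆ polarCoord.target :=
    Set.prod_mono_right (Set.Ioo_subset_Ioo_left (neg_nonpos.2 Real.pi_pos.le))
  have hpolar {z : ℝ × ℝ} (hz : z ∈ polarCoord.target) :
      polarCoord.symm z ∈ (Prod.snd ⁻¹' Set.Ioi 0 : Set (ℝ × ℝ)) ↔
        z ∈ (Set.Ioi 0 ×ˢ Set.Ioo 0 Real.pi : Set (ℝ × ℝ)) := by
    obtain ⟨hr : 0 < z.1, hφ : -Real.pi < z.2, hφ' : z.2 < Real.pi⟩ := hz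
    simp only [polarCoord_symm_apply, Set.mem_preimage, Set.mem_Ioi, mul_pos_iff_of_pos_left hr,
      Set.mem_prod, hr, Set.mem_Ioo, hφ', and_true, true_and]
    refine ⟨fun h => ?_, fun h => Real.sin_pos_of_pos_of_lt_pi h hφ'⟩
    contrapose! h
    exact Real.sin_nonpos_of_nonpos_of_neg_pi_le h hφ.le
  calc
    _ = ∫⁻ z in Set.univ ×ˢ Set.Ioi 0, f z := by
      rw [Measure.volume_eq_prod, setLIntegral_prod _ hf.aemeasurable, Measure.restrict_univ]
    _ = ∫⁻ z, (Prod.snd ⁻¹' Set.Ioi 0).indicator f z := by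
      rw [lintegral_indicator hU, Set.univ_prod]
    _ = ∫⁻ z in polarCoord.target, (Set.Ioi 0 ×ˢ Set.Ioo 0 Real.pi).indicator
          (fun z => ENNReal.ofReal z.1 * f (polarCoord.symm z)) z := by
      rw [← lintegral_comp_polarCoord_symm]
      refine setLIntegral_congr_fun polarCoord.open_target.measurableSet fun z hz => ?_
      by_cases h : z ∈ (Set.Ioi 0 ×ˢ Set.Ioo 0 Real.pi : Set (ℝ × ℝ))
      · simp only [Set.indicator_of_mem h, Set.indicator_of_mem ((hpolar hz).2 h), smul_eq_mul]
      · simp only [Set.indicator_of_notMem h, Set.indicator_of_notMem (mt (hpolar hz).1 h),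
          smul_zero]
    _ = _ := by
      rw [setLIntegral_indicator hS, Set.inter_eq_left.2 hsub, Measure.volume_eq_prod,
        setLIntegral_prod _ (by fun_prop)]
      rfl

lemma lintegral_upperHalfPlane_angular_mul_radial (q : ℕ) {f g : ℝ → ENNReal}
    (hf : Measurable f) (hg : Measurable g) :
    ∫⁻ t : ℝ, ∫⁻ s in Set.Ioi (0 : ℝ), ENNReal.ofReal (s ^ q) *
        (f ((√(t ^ 2 + s ^ 2))⁻¹ * t) * g √(t ^ 2 + s ^ 2)) =
      (∫⁻ φ in Set.Ioo 0 Real.pi, ENNReal.ofReal (Real.sin φ ^ q) * f (Real.cos φ)) *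
        ∫⁻ r in Set.Ioi 0, ENNReal.ofReal (r ^ (q + 1)) * g r := by
  rw [lintegral_upperHalfPlane_comp_polarCoord_symm (f := fun z => ENNReal.ofReal (z.2 ^ q) *
      (f ((√(z.1 ^ 2 + z.2 ^ 2))⁻¹ * z.1) * g √(z.1 ^ 2 + z.2 ^ 2))) (by fun_prop),
    ← lintegral_const_mul _ (by fun_prop)]
  refine setLIntegral_congr_fun measurableSet_Ioi fun r (hr : 0 < r) => ?_
  simp only
  rw [← lintegral_mul_const _ (by fun_prop)]
  refine setLIntegral_congr_fun measurableSet_Ioo fun φ _ => ?_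
  have hnorm : √((r * Real.cos φ) ^ 2 + (r * Real.sin φ) ^ 2) = r := by
    rw [mul_pow, mul_pow, ← mul_add, Real.cos_sq_add_sin_sq, mul_one, Real.sqrt_sq hr.le]
  simp only [hnorm]
  rw [inv_mul_cancel_left₀ hr.ne', mul_pow, pow_succ, ENNReal.ofReal_mul (pow_nonneg hr.le q),
    ENNReal.ofReal_mul (pow_nonneg hr.le q)]
  ring

lemma lintegral_sin_pow_mul_comp_cos (q : ℕ) (f : ℝ → ENNReal) :
    ∫⁻ φ in Set.Ioo 0 Real.pi, ENNReal.ofReal (Real.sin φ ^ q) * f (Real.cos φ) =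
      ∫⁻ u in Set.Ioo (-1 : ℝ) 1, ENNReal.ofReal ((1 - u ^ 2) ^ (((q : ℝ) - 1) / 2)) * f u := by
  have himage : Real.cos '' Set.Ioo 0 Real.pi = Set.Ioo (-1) 1 := by
    simpa using Real.cosPartialHomeomorph.image_source_eq_target
  rw [← himage, lintegral_image_eq_lintegral_abs_deriv_mul measurableSet_Ioo
    (fun φ _ => (Real.hasDerivAt_cos φ).hasDerivWithinAt)
    (Real.injOn_cos.mono Set.Ioo_subset_Icc_self)]
  refine setLIntegral_congr_fun measurableSet_Ioo fun φ hφ => ?_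
  have hsin : 0 < Real.sin φ := Real.sin_pos_of_mem_Ioo hφ
  have hpow : Real.sin φ ^ q =
      (1 - Real.cos φ ^ 2) ^ (((q : ℝ) - 1) / 2) * Real.sin φ := by
    rw [← Real.sin_sq, ← Real.rpow_natCast (Real.sin φ) 2, ← Real.rpow_mul hsin.le,
      ← Real.rpow_add_one hsin.ne', ← Real.rpow_natCast]
    congr 1
    push_cast
    ring
  rw [← mul_assoc, ← ENNReal.ofReal_mul (abs_nonneg _), abs_neg, abs_of_pos hsin, hpow,
    mul_comm (Real.sin φ)]

/-- The measure on `ℝ` with density `(1 - u²)^a` on `(-1, 1)`, the weight of the Gegenbauer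
polynomials. For `a = (p - 3) / 2` it is, up to a constant, the law of a coordinate of a uniform
point of the unit sphere of `ℝ^p`. -/
noncomputable def gegenbauerMeasure (a : ℝ) : Measure ℝ :=
  (volume.restrict (Set.Ioo (-1) 1)).withDensity fun u => ENNReal.ofReal ((1 - u ^ 2) ^ a)

lemma lintegral_gegenbauerMeasure (a : ℝ) {f : ℝ → ENNReal} (hf : Measurable f) :
    ∫⁻ u, f u ∂gegenbauerMeasure a =
      ∫⁻ u in Set.Ioo (-1 : ℝ) 1, ENNReal.ofReal ((1 - u ^ 2) ^ a) * f u :=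
  lintegral_withDensity_eq_lintegral_mul _ (by fun_prop) hf

lemma lintegral_pow_mul_indicator_Iio_one (k : ℕ) :
    ∫⁻ r in Set.Ioi (0 : ℝ), ENNReal.ofReal (r ^ k) * (Set.Iio 1).indicator 1 r =
      ENNReal.ofReal (1 / (k + 1)) := by
  calc
    _ = ∫⁻ r in Set.Ioo (0 : ℝ) 1, ENNReal.ofReal (r ^ k) := by
      rw [← Set.Ioi_inter_Iio, Set.inter_comm, ← Measure.restrict_restrict measurableSet_Iio,
        ← lintegral_indicator measurableSet_Iio]
      simp [Set.indicator]
    _ = ENNReal.ofReal (∫ r in (0 : ℝ)..1, r ^ k) := by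
      rw [intervalIntegral.integral_of_le zero_le_one, integral_Ioc_eq_integral_Ioo,
        ofReal_integral_eq_lintegral_ofReal]
      · exact (integrableOn_Ioc_iff_integrableOn_Ioo (by simp)).1
          ((intervalIntegrable_iff_integrableOn_Ioc_of_le zero_le_one).1 (by simp))
      · exact (ae_restrict_mem measurableSet_Ioo).mono fun r hr => pow_nonneg hr.1.le k
    _ = _ := by simp [integral_pow]

section Projection

variable {E : Type*} [NormedAddCommGroup E] [InnerProductSpace ℝ E] [FiniteDimensional ℝ E]
  [MeasurableSpace E] [BorelSpace E]

lemma toSphere_orthogonal_span_singleton_univ_ne_zero (hE : 2 ≤ Module.finrank ℝ E) (θ : E) :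
    (volume : Measure (ℝ ∙ θ)ᗮ).toSphere Set.univ ≠ 0 := by
  have hadd := (ℝ ∙ θ).finrank_add_finrank_orthogonal
  have hspan : Module.finrank ℝ (ℝ ∙ θ) ≤ 1 := by simpa using finrank_span_le_card (R := ℝ) {θ}
  have : Nontrivial (ℝ ∙ θ)ᗮ := Module.finrank_pos_iff (R := ℝ) |>.1 (by lia)
  exact Measure.measure_univ_ne_zero.2 (Measure.toSphere_ne_zero _)

lemma lintegral_comp_inner_toSphere {q : ℕ} (hE : Module.finrank ℝ E = q + 2) {θ : E}
    (hθ : ‖θ‖ = 1) {f : ℝ → ENNReal} (hf : Measurable f) :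
    ∫⁻ x : sphere (0 : E) 1, f ⟪(x : E), θ⟫ ∂(volume : Measure E).toSphere =
      (volume : Measure (ℝ ∙ θ)ᗮ).toSphere Set.univ *
        ∫⁻ u, f u ∂gegenbauerMeasure (((q : ℝ) - 1) / 2) := by
  have : Nontrivial E := Module.nontrivial_of_finrank_eq_succ hE
  have : Fact (Module.finrank ℝ E = q + 1 + 1) := ⟨hE⟩
  have hθ0 : θ ≠ 0 := norm_ne_zero_iff.1 (hθ ▸ one_ne_zero)
  have hperp : Module.finrank ℝ (ℝ ∙ θ)ᗮ = q + 1 :=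
    Submodule.finrank_orthogonal_span_singleton hθ0
  have : Nontrivial (ℝ ∙ θ)ᗮ := Module.nontrivial_of_finrank_eq_succ hperp
  -- The cutoff `g` makes the radial factor `J` finite and nonzero, so that it cancels.
  let g : ℝ → ENNReal := (Set.Iio 1).indicator 1
  have hg : Measurable g := measurable_one.indicator measurableSet_Iio
  let J := ∫⁻ r in Set.Ioi 0, ENNReal.ofReal (r ^ (q + 1)) * g r
  have hJ : J = ENNReal.ofReal (1 / ((q + 1 : ℕ) + 1)) := lintegral_pow_mul_indicator_Iio_one _
  have hJ0 : J ≠ 0 := by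
    rw [hJ]
    exact (ENNReal.ofReal_pos.2 (by positivity)).ne'
  refine (ENNReal.mul_left_inj hJ0 (hJ ▸ ENNReal.ofReal_ne_top)).1 ?_
  calc
    _ = ∫⁻ x : E, f (‖x‖⁻¹ * ⟪x, θ⟫) * g ‖x‖ := by
      have h := lintegral_comp_inv_norm_smul_mul_comp_norm (volume : Measure E)
        (f := fun x => f ⟪x, θ⟫) (hf.comp measurable_id.inner_const) hg
      simpa [hE, real_inner_smul_left, J] using h.symm
    _ = ∫⁻ t : ℝ, ∫⁻ y : (ℝ ∙ θ)ᗮ,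
          f ((√(t ^ 2 + ‖y‖ ^ 2))⁻¹ * t) * g √(t ^ 2 + ‖y‖ ^ 2) :=
      lintegral_comp_inner_norm hθ (f := fun t r => f (r⁻¹ * t) * g r) (by fun_prop)
    _ = ∫⁻ t : ℝ, (volume : Measure (ℝ ∙ θ)ᗮ).toSphere Set.univ * ∫⁻ s in Set.Ioi 0,
          ENNReal.ofReal (s ^ q) * (f ((√(t ^ 2 + s ^ 2))⁻¹ * t) * g √(t ^ 2 + s ^ 2)) := by
      congr with t
      have h := lintegral_comp_inv_norm_smul_mul_comp_norm (volume : Measure (ℝ ∙ θ)ᗮ) (f := 1)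
        measurable_one
        (g := fun s => f ((√(t ^ 2 + s ^ 2))⁻¹ * t) * g √(t ^ 2 + s ^ 2)) (by fun_prop)
      simpa [hperp] using h
    _ = _ := by
      rw [lintegral_const_mul' _ _ (measure_ne_top _ _),
        lintegral_upperHalfPlane_angular_mul_radial q hf hg, lintegral_sin_pow_mul_comp_cos,
        lintegral_gegenbauerMeasure _ hf, mul_assoc]

lemma map_inner_toSphere (hE : 2 ≤ Module.finrank ℝ E) {θ : E} (hθ : ‖θ‖ = 1) :
    (volume : Measure E).toSphere.map (fun x : sphere (0 : E) 1 => ⟪(x : E), θ⟫) =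
      (volume : Measure (ℝ ∙ θ)ᗮ).toSphere Set.univ •
        gegenbauerMeasure (((Module.finrank ℝ E : ℝ) - 3) / 2) := by
  obtain ⟨q, hq⟩ := Nat.exists_eq_add_of_le' hE
  refine Measure.ext_of_lintegral _ fun f hf => ?_
  rw [lintegral_map hf (by fun_prop), lintegral_comp_inner_toSphere hq hθ hf,
    lintegral_smul_measure, hq]
  congr 4
  push_cast
  ring

end Projection

section Tilted

variable {α β : Type*} [MeasurableSpace α] [MeasurableSpace β]

lemma map_tilted_comp {μ : Measure α} {T : α → β} (hT : Measurable T) {f : β → ℝ}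
    (hf : Measurable f) : (μ.tilted (f ∘ T)).map T = (μ.map T).tilted f := by
  refine Measure.ext_of_lintegral _ fun g hg => ?_
  have hZ : ∫ y, Real.exp (f y) ∂μ.map T = ∫ x, Real.exp (f (T x)) ∂μ :=
    integral_map hT.aemeasurable (by fun_prop)
  rw [lintegral_map hg hT, lintegral_tilted, lintegral_tilted, lintegral_map (by fun_prop) hT, hZ]
  rfl

lemma smul_tilted (μ : Measure α) {c : ENNReal} (hc : c ≠ 0) (hc' : c ≠ ⊤) (f : α → ℝ) :
    (c • μ).tilted f = μ.tilted f := by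
  have hreal : 0 < c.toReal := ENNReal.toReal_pos hc hc'
  rw [Measure.tilted, Measure.tilted, MeasureTheory.integral_smul_measure,
    withDensity_smul_measure, ← withDensity_smul' _ _ hc']
  congr with x
  rw [Pi.smul_apply, smul_eq_mul, smul_eq_mul]
  nth_rw 1 [← ENNReal.ofReal_toReal hc']
  rw [← ENNReal.ofReal_mul hreal.le]
  congr 1
  field_simp

end Tilted

section SampleMean

open ProbabilityTheory

lemma integral_sum_div_sub_one_sq_pi {Ω : Type*} [MeasurableSpace Ω] {μ : Measure Ω}
    [IsProbabilityMeasure μ] {X : Ω → ℝ} (hX : MemLp X 2 μ) (hm : ∫ ω, X ω ∂μ ≠ 0) {n : ℕ}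
    (hn : n ≠ 0) :
    ∫ ω : Fin n → Ω, ((∑ i, X (ω i)) / (n * ∫ ω, X ω ∂μ) - 1) ^ 2 ∂(Measure.pi fun _ => μ) =
      Var[X; μ] / (n * (∫ ω, X ω ∂μ) ^ 2) := by
  set m := ∫ ω, X ω ∂μ
  have hn' : (n : ℝ) ≠ 0 := Nat.cast_ne_zero.2 hn
  let S : (Fin n → Ω) → ℝ := ∑ i, fun ω => X (ω i)
  have hint : Integrable X μ := hX.integrable one_le_two
  have hmean : ∫ ω, S ω ∂(Measure.pi fun _ => μ) = n * m := by
    have hcoord (i : Fin n) : ∫ ω : Fin n → Ω, X (ω i) ∂(Measure.pi fun _ => μ) = m :=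
      integral_comp_eval hint.aestronglyMeasurable
    simp only [S, Finset.sum_apply]
    rw [MeasureTheory.integral_finsetSum _ fun i _ => integrable_comp_eval hint]
    simp [hcoord]
  have hvar : Var[S; Measure.pi fun _ => μ] = n * Var[X; μ] := by
    rw [variance_sum_pi fun _ => hX]
    simp
  have hS : AEMeasurable S (Measure.pi fun _ => μ) :=
    Finset.aemeasurable_sum _ fun i _ => (integrable_comp_eval hint).aemeasurable
  rw [variance_eq_integral hS, hmean] at hvar
  calc
    _ = ∫ ω, ((n * m) ^ 2)⁻¹ * (S ω - n * m) ^ 2 ∂(Measure.pi fun _ => μ) := by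
      congr with ω
      simp only [S, Finset.sum_apply]
      field_simp
    _ = _ := by
      rw [MeasureTheory.integral_const_mul, hvar]
      field_simp

end SampleMean

lemma mul_tanh_le_mul_tanh {x y : ℝ} (h : |x| ≤ |y|) :
    x * Real.tanh x ≤ y * Real.tanh y := by
  have abs_mul_tanh_abs (z : ℝ) : |z| * Real.tanh |z| = z * Real.tanh z := by
    rcases abs_choice z with hz | hz <;> simp [hz]
  have tanh_nonneg : 0 ≤ Real.tanh |y| := by
    rw [Real.tanh_eq_sinh_div_cosh]
    exact div_nonneg (Real.sinh_nonneg_iff.2 (abs_nonneg y)) (Real.cosh_pos _).le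
  have tanh_le_tanh : Real.tanh |x| ≤ Real.tanh |y| := by
    have hsinh : 0 ≤ Real.sinh (|y| - |x|) := Real.sinh_nonneg_iff.2 (sub_nonneg.2 h)
    rw [Real.sinh_sub] at hsinh
    rw [Real.tanh_eq_sinh_div_cosh, Real.tanh_eq_sinh_div_cosh,
      div_le_div_iff₀ (Real.cosh_pos _) (Real.cosh_pos _)]
    linarith
  rw [← abs_mul_tanh_abs x, ← abs_mul_tanh_abs y]
  exact (mul_le_mul_of_nonneg_left tanh_le_tanh (abs_nonneg x)).trans
    (mul_le_mul_of_nonneg_right h tanh_nonneg)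

lemma mul_tanh_sub_mul_tanh_sqrt_mul_nonneg (κ u : ℝ) {s : ℝ} (hs : 0 ≤ s) :
    0 ≤ (κ * u * Real.tanh (κ * u) - κ * √s * Real.tanh (κ * √s)) * (u ^ 2 - s) := by
  have hsq : (κ * √s) ^ 2 = κ ^ 2 * s := by rw [mul_pow, Real.sq_sqrt hs]
  rcases le_total s (u ^ 2) with h | h
  · refine mul_nonneg (sub_nonneg.2 (mul_tanh_le_mul_tanh (sq_le_sq.1 ?_))) (sub_nonneg.2 h)
    rw [hsq, mul_pow]
    gcongr
  · refine mul_nonneg_of_nonpos_of_nonpos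
      (sub_nonpos.2 (mul_tanh_le_mul_tanh (sq_le_sq.1 ?_))) (sub_nonpos.2 h)
    rw [hsq, mul_pow]
    gcongr

section Symmetric

open ProbabilityTheory

variable {μ : Measure ℝ} {κ : ℝ}

lemma integrable_pow_tilted (hκ : κ ∈ interior (integrableExpSet id μ)) (k : ℕ) :
    Integrable (fun u => u ^ k) (μ.tilted (κ * ·)) := by
  have hexp : Integrable (fun u => Real.exp (κ * u)) μ :=
    integrable_of_mem_integrableExpSet (interior_subset hκ)
  rw [integrable_tilted_iff hexp]
  refine (integrable_pow_mul_exp_of_mem_interior_integrableExpSet hκ k).congr ?_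
  exact .of_forall fun u => mul_comm _ _

variable [μ.IsNegInvariant]

lemma integrable_mul_tanh {ν : Measure ℝ} {f : ℝ → ℝ} (hf : Integrable f ν) (κ : ℝ) :
    Integrable (fun u => f u * Real.tanh (κ * u)) ν := by
  have htanh : Continuous fun u => Real.tanh (κ * u) := by
    simp only [Real.tanh_eq_sinh_div_cosh]
    fun_prop (disch := exact fun _ => (Real.cosh_pos _).ne')
  exact hf.mul_bdd (c := 1) htanh.aestronglyMeasurable
    (.of_forall fun u => (Real.abs_tanh_lt_one _).le)

lemma integral_mul_one_sub_tanh_tilted {f : ℝ → ℝ} (hf : Function.Odd f) :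
    ∫ u, f u * (1 - Real.tanh (κ * u)) ∂μ.tilted (κ * ·) = 0 := by
  let Z := ∫ u, Real.exp (κ * u) ∂μ
  have hcosh (u : ℝ) : (Real.exp (κ * u) / Z) • (f u * (1 - Real.tanh (κ * u))) =
      f u / (Real.cosh (κ * u) * Z) := by
    have hne : Real.cosh (κ * u) ≠ 0 := (Real.cosh_pos _).ne'
    have hexp : Real.exp (κ * u) * (Real.cosh (κ * u) - Real.sinh (κ * u)) = 1 := by
      rw [Real.cosh_sub_sinh, ← Real.exp_add, add_neg_cancel, Real.exp_zero]
    rw [Real.tanh_eq_sinh_div_cosh, one_sub_div hne, smul_eq_mul]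
    calc
      _ = Real.exp (κ * u) * (Real.cosh (κ * u) - Real.sinh (κ * u)) *
          (f u / (Real.cosh (κ * u) * Z)) := by ring
      _ = _ := by rw [hexp, one_mul]
  rw [integral_tilted]
  simp only [Z] at hcosh
  simp only [hcosh]
  rw [← self_eq_neg, ← MeasureTheory.integral_neg]
  nth_rw 1 [← integral_neg_eq_self]
  simp [hf _, neg_div]

lemma integral_tilted_eq_integral_mul_tanh {f : ℝ → ℝ} (hf : Function.Odd f)
    (hint : Integrable f (μ.tilted (κ * ·))) :
    ∫ u, f u ∂μ.tilted (κ * ·) = ∫ u, f u * Real.tanh (κ * u) ∂μ.tilted (κ * ·) := by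
  rw [← sub_eq_zero, ← MeasureTheory.integral_sub hint (integrable_mul_tanh hint κ),
    ← integral_mul_one_sub_tanh_tilted (μ := μ) (κ := κ) hf]
  simp only [mul_sub, mul_one]

lemma mul_integral_mul_integral_sq_tilted_le [NeZero μ]
    (hκ : κ ∈ interior (integrableExpSet id μ)) :
    κ * ((∫ u, u ∂μ.tilted (κ * ·)) * ∫ u, u ^ 2 ∂μ.tilted (κ * ·)) ≤
      κ * ∫ u, u ^ 3 ∂μ.tilted (κ * ·) := by
  have hmom := integrable_pow_tilted hκ
  set ν := μ.tilted (κ * ·)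
  have : IsProbabilityMeasure ν :=
    isProbabilityMeasure_tilted (integrable_of_mem_integrableExpSet (interior_subset hκ))
  let s := ∫ u, u ^ 2 ∂ν
  have hs : 0 ≤ s := MeasureTheory.integral_nonneg fun u => sq_nonneg u
  let w (u : ℝ) := κ * (u ^ 3 - s * u)
  let T := κ * √s * Real.tanh (κ * √s)
  have hcube : Integrable (fun u => u ^ 3) ν := hmom 3
  have hlin : Integrable (fun u => s * u) ν := by simpa using (hmom 1).const_mul s
  have hsq : Integrable (fun u => T * (u ^ 2 - s)) ν :=
    ((hmom 2).sub (integrable_const s)).const_mul T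
  have hw : Integrable w ν := (hcube.sub hlin).const_mul κ
  have hmean : ∫ u, T * (u ^ 2 - s) ∂ν = 0 := by
    rw [MeasureTheory.integral_const_mul,
      MeasureTheory.integral_sub (hmom 2) (integrable_const s)]
    simp [s]
  have hpos (u : ℝ) : 0 ≤ w u * Real.tanh (κ * u) - T * (u ^ 2 - s) :=
    (mul_tanh_sub_mul_tanh_sqrt_mul_nonneg κ u hs).trans_eq (by ring)
  have key : 0 ≤ ∫ u, w u ∂ν := by
    calc
      0 ≤ ∫ u, w u * Real.tanh (κ * u) - T * (u ^ 2 - s) ∂ν :=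
        MeasureTheory.integral_nonneg hpos
      _ = ∫ u, w u * Real.tanh (κ * u) ∂ν := by
        rw [MeasureTheory.integral_sub (integrable_mul_tanh hw κ) hsq, hmean, sub_zero]
      _ = ∫ u, w u ∂ν :=
        (integral_tilted_eq_integral_mul_tanh (fun u => by ring) hw).symm
  rw [MeasureTheory.integral_const_mul, MeasureTheory.integral_sub hcube hlin,
    MeasureTheory.integral_const_mul] at key
  linarith

end Symmetric

section Gegenbauer

open ProbabilityTheory

lemma intervalIntegrable_one_sub_sq_rpow {a : ℝ} (ha : -1 < a) :
    IntervalIntegrable (fun u : ℝ => (1 - u ^ 2) ^ a) volume (-1) 1 := by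
  have hright : IntervalIntegrable (fun u : ℝ => (1 - u ^ 2) ^ a) volume 0 1 := by
    have hsub : IntervalIntegrable (fun u : ℝ => (1 - u) ^ a) volume 0 1 := by
      simpa using ((intervalIntegrable_rpow' ha (a := 0) (b := 1)).comp_sub_left 1).symm
    have hadd : ContinuousOn (fun u : ℝ => (1 + u) ^ a) (Set.uIcc 0 1) := by
      refine ContinuousOn.rpow_const (by fun_prop) fun u hu => .inl ?_
      rw [Set.uIcc_of_le zero_le_one] at hu
      linarith [hu.1]
    refine (hsub.mul_continuousOn hadd).congr fun u hu => ?_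
    rw [Set.uIoc_of_le zero_le_one] at hu
    rw [← Real.mul_rpow (by linarith [hu.2]) (by linarith [hu.1])]
    ring_nf
  have hleft : IntervalIntegrable (fun u : ℝ => (1 - u ^ 2) ^ a) volume (-1) 0 := by
    simpa using ((IntervalIntegrable.iff_comp_neg (by simp)).1 hright).symm
  exact hleft.trans hright

instance (a : ℝ) : (gegenbauerMeasure a).IsNegInvariant where
  neg_eq_self := by
    refine Measure.ext_of_lintegral _ fun f hf => ?_
    rw [Measure.neg_def, lintegral_map hf measurable_neg, lintegral_gegenbauerMeasure a hf,
      lintegral_gegenbauerMeasure a (f := fun u => f (-u)) (by fun_prop),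
      ← (Measure.measurePreserving_neg volume).setLIntegral_comp_preimage measurableSet_Ioo
        (by fun_prop)]
    simp

instance (a : ℝ) : NeZero (gegenbauerMeasure a) where
  out h := by
    have hdensity : ∀ᵐ u ∂volume.restrict (Set.Ioo (-1 : ℝ) 1),
        ENNReal.ofReal ((1 - u ^ 2) ^ a) ≠ 0 := by
      refine (ae_restrict_mem measurableSet_Ioo).mono fun u hu => ?_
      have : 0 < 1 - u ^ 2 := by nlinarith [hu.1, hu.2]
      simpa using Real.rpow_pos_of_pos this a
    have hac := withDensity_absolutelyContinuous' (by fun_prop) hdensity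
    rw [← gegenbauerMeasure, h, Measure.absolutelyContinuous_zero_iff,
      Measure.restrict_eq_zero] at hac
    norm_num at hac

lemma ae_mem_Ioo_gegenbauerMeasure (a : ℝ) : ∀ᵐ u ∂gegenbauerMeasure a, u ∈ Set.Ioo (-1 : ℝ) 1 :=
  (withDensity_absolutelyContinuous _ _).ae_le (ae_restrict_mem measurableSet_Ioo)

lemma integral_gegenbauerMeasure (a : ℝ) (f : ℝ → ℝ) :
    ∫ u, f u ∂gegenbauerMeasure a = ∫ u in (-1 : ℝ)..1, (1 - u ^ 2) ^ a * f u := by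
  rw [gegenbauerMeasure, integral_withDensity_eq_integral_toReal_smul (by fun_prop) (by simp),
    intervalIntegral.integral_of_le (by norm_num), integral_Ioc_eq_integral_Ioo]
  refine setIntegral_congr_fun measurableSet_Ioo fun u hu => ?_
  have : 0 ≤ 1 - u ^ 2 := by nlinarith [hu.1, hu.2]
  simp only [ENNReal.toReal_ofReal (Real.rpow_nonneg this a), smul_eq_mul]

variable {a : ℝ} (ha : -1 < a)
include ha

lemma isFiniteMeasure_gegenbauerMeasure : IsFiniteMeasure (gegenbauerMeasure a) :=
  isFiniteMeasure_withDensity_ofReal <| ((integrableOn_Ioc_iff_integrableOn_Ioo (by simp)).1 <|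
    (intervalIntegrable_iff_integrableOn_Ioc_of_le (by norm_num)).1
      (intervalIntegrable_one_sub_sq_rpow ha)).2

lemma integrable_gegenbauerMeasure {f : ℝ → ℝ} (hf : Continuous f) :
    Integrable f (gegenbauerMeasure a) := by
  have := isFiniteMeasure_gegenbauerMeasure ha
  obtain ⟨C, hC⟩ := isCompact_Icc.exists_bound_of_continuousOn (s := Set.Icc (-1 : ℝ) 1)
    hf.continuousOn
  exact .of_bound hf.aestronglyMeasurable C <| (ae_mem_Ioo_gegenbauerMeasure a).mono
    fun u hu => hC u (Set.Ioo_subset_Icc_self hu)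

lemma integrableExpSet_gegenbauerMeasure : integrableExpSet id (gegenbauerMeasure a) = Set.univ :=
  Set.eq_univ_of_forall fun κ =>
    integrable_gegenbauerMeasure ha (f := fun u => Real.exp (κ * u)) (by fun_prop)

lemma integral_one_sub_sq_mul_deriv_gegenbauerMeasure {f f' : ℝ → ℝ}
    (hf : ∀ u, HasDerivAt f (f' u) u) (hf' : Continuous f') :
    ∫ u, (1 - u ^ 2) * f' u ∂gegenbauerMeasure a =
      2 * (a + 1) * ∫ u, u * f u ∂gegenbauerMeasure a := by
  have hfc : Continuous f := continuous_iff_continuousAt.2 fun u => (hf u).continuousAt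
  let F (u : ℝ) := (1 - u ^ 2) ^ (a + 1) * f u
  let F' (u : ℝ) := (1 - u ^ 2) ^ a * ((1 - u ^ 2) * f' u - 2 * (a + 1) * (u * f u))
  have hF : Continuous F :=
    ((continuous_const.sub (continuous_pow 2)).rpow_const fun u => .inr (by linarith)).mul hfc
  have hFderiv : ∀ u ∈ Set.Ioo (-1 : ℝ) 1, HasDerivAt F (F' u) u := by
    intro u hu
    have hpos : 0 < 1 - u ^ 2 := by nlinarith [hu.1, hu.2]
    have hpow : HasDerivAt (fun u : ℝ => (1 - u ^ 2) ^ (a + 1))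
        (-(2 * u) * (a + 1) * (1 - u ^ 2) ^ a) u := by
      simpa using ((hasDerivAt_pow 2 u).const_sub 1).rpow_const (p := a + 1) (.inl hpos.ne')
    convert! hpow.mul (hf u) using 1
    rw [Real.rpow_add_one hpos.ne']
    ring
  have hF' : IntervalIntegrable F' volume (-1) 1 :=
    (intervalIntegrable_one_sub_sq_rpow ha).mul_continuousOn (by fun_prop)
  have hzero : ∫ u, (1 - u ^ 2) * f' u - 2 * (a + 1) * (u * f u) ∂gegenbauerMeasure a = 0 := by
    rw [integral_gegenbauerMeasure,
      integral_eq_sub_of_hasDerivAt_of_le (by norm_num) hF.continuousOn hFderiv hF']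
    simp [F, Real.zero_rpow (by linarith : a + 1 ≠ 0)]
  rwa [MeasureTheory.integral_sub (integrable_gegenbauerMeasure ha (by fun_prop))
    (integrable_gegenbauerMeasure ha (by fun_prop)), MeasureTheory.integral_const_mul,
    sub_eq_zero] at hzero

end Gegenbauer

section TiltedGegenbauer

open ProbabilityTheory

/-- The probability measure on `ℝ` with density proportional to `(1 - u²)^a exp(κ u)` on
`(-1, 1)`. For `a = (p - 3) / 2` it is the law of `X'θ` when `X` has law `FvML_p(θ,κ)`. -/
noncomputable def tiltedGegenbauer (a κ : ℝ) : Measure ℝ :=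
  (gegenbauerMeasure a).tilted (κ * ·)

variable {a : ℝ} (ha : -1 < a) (κ : ℝ)
include ha

lemma isProbabilityMeasure_tiltedGegenbauer : IsProbabilityMeasure (tiltedGegenbauer a κ) :=
  isProbabilityMeasure_tilted (integrable_gegenbauerMeasure ha (by fun_prop))

lemma integrable_tiltedGegenbauer {f : ℝ → ℝ} (hf : Continuous f) :
    Integrable f (tiltedGegenbauer a κ) :=
  (integrable_tilted_iff (integrable_gegenbauerMeasure ha (by fun_prop)) f).2
    (integrable_gegenbauerMeasure ha (by fun_prop))

lemma memLp_two_tiltedGegenbauer {f : ℝ → ℝ} (hf : Continuous f) :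
    MemLp f 2 (tiltedGegenbauer a κ) :=
  (memLp_two_iff_integrable_sq hf.aestronglyMeasurable).2
    (integrable_tiltedGegenbauer ha κ (hf.pow 2))

lemma integral_one_sub_sq_mul_deriv_add_tiltedGegenbauer {g g' : ℝ → ℝ}
    (hg : ∀ u, HasDerivAt g (g' u) u) (hg' : Continuous g') :
    ∫ u, (1 - u ^ 2) * (g' u + κ * g u) ∂tiltedGegenbauer a κ =
      2 * (a + 1) * ∫ u, u * g u ∂tiltedGegenbauer a κ := by
  have hgc : Continuous g := continuous_iff_continuousAt.2 fun u => (hg u).continuousAt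
  let Z := ∫ u, Real.exp (κ * u) ∂gegenbauerMeasure a
  have hderiv (u : ℝ) : HasDerivAt (fun u => Real.exp (κ * u) / Z * g u)
      (Real.exp (κ * u) / Z * (g' u + κ * g u)) u := by
    convert! ((((hasDerivAt_id u).const_mul κ).exp).div_const Z).mul (hg u) using 1
    simp only [id_eq]
    ring
  have h := integral_one_sub_sq_mul_deriv_gegenbauerMeasure ha hderiv (by fun_prop)
  simp only [mul_left_comm _ (Real.exp _ / Z)] at h
  rw [tiltedGegenbauer, integral_tilted, integral_tilted]
  exact h

lemma mul_integral_one_sub_sq_tiltedGegenbauer :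
    κ * ∫ u, 1 - u ^ 2 ∂tiltedGegenbauer a κ =
      2 * (a + 1) * ∫ u, u ∂tiltedGegenbauer a κ := by
  have h := integral_one_sub_sq_mul_deriv_add_tiltedGegenbauer ha κ
    (fun u => hasDerivAt_const u (1 : ℝ)) continuous_const
  simpa [MeasureTheory.integral_mul_const, mul_comm κ] using h

lemma mul_integral_one_sub_sq_sq_tiltedGegenbauer :
    κ * ∫ u, (1 - u ^ 2) ^ 2 ∂tiltedGegenbauer a κ =
      2 * (a + 2) * ∫ u, u * (1 - u ^ 2) ∂tiltedGegenbauer a κ := by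
  have h := integral_one_sub_sq_mul_deriv_add_tiltedGegenbauer ha κ
    (fun u => (hasDerivAt_pow 2 u).const_sub 1) (by fun_prop)
  have hexpand (u : ℝ) : (1 - u ^ 2) * (-(2 * u) + κ * (1 - u ^ 2)) =
      κ * (1 - u ^ 2) ^ 2 - 2 * (u * (1 - u ^ 2)) := by ring
  simp only [Nat.cast_ofNat, Nat.add_one_sub_one, pow_one, hexpand] at h
  rw [MeasureTheory.integral_sub (integrable_tiltedGegenbauer ha κ (by fun_prop))
    (integrable_tiltedGegenbauer ha κ (by fun_prop)), MeasureTheory.integral_const_mul,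
    MeasureTheory.integral_const_mul] at h
  linarith

lemma integral_one_sub_sq_tiltedGegenbauer_zero :
    (2 * a + 3) * ∫ u, 1 - u ^ 2 ∂tiltedGegenbauer a 0 = 2 * (a + 1) := by
  have := isProbabilityMeasure_tiltedGegenbauer ha 0
  have hint {f : ℝ → ℝ} (hf : Continuous f) := integrable_tiltedGegenbauer ha 0 hf
  have h := integral_one_sub_sq_mul_deriv_add_tiltedGegenbauer ha 0 hasDerivAt_id continuous_const
  have hsq : ∫ u, u * u ∂tiltedGegenbauer a 0 = 1 - ∫ u, 1 - u ^ 2 ∂tiltedGegenbauer a 0 := by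
    rw [MeasureTheory.integral_sub (hint (by fun_prop)) (hint (by fun_prop))]
    simp [sq]
  simp only [zero_mul, add_zero, mul_one, id_eq, hsq] at h
  linarith

lemma integral_one_sub_sq_sq_tiltedGegenbauer_zero :
    (2 * a + 5) * ∫ u, (1 - u ^ 2) ^ 2 ∂tiltedGegenbauer a 0 =
      2 * (a + 2) * ∫ u, 1 - u ^ 2 ∂tiltedGegenbauer a 0 := by
  have hint {f : ℝ → ℝ} (hf : Continuous f) := integrable_tiltedGegenbauer ha 0 hf
  have hderiv (u : ℝ) : HasDerivAt (fun u => u - u ^ 3) (1 - 3 * u ^ 2) u := by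
    simpa using (hasDerivAt_id' u).fun_sub (hasDerivAt_pow 3 u)
  have h := integral_one_sub_sq_mul_deriv_add_tiltedGegenbauer ha 0 hderiv (by fun_prop)
  have hleft (u : ℝ) : (1 - u ^ 2) * (1 - 3 * u ^ 2 + 0 * (u - u ^ 3)) =
      3 * (1 - u ^ 2) ^ 2 - 2 * (1 - u ^ 2) := by ring
  have hright (u : ℝ) : u * (u - u ^ 3) = (1 - u ^ 2) - (1 - u ^ 2) ^ 2 := by ring
  simp only [hleft, hright] at h
  rw [MeasureTheory.integral_sub (hint (by fun_prop)) (hint (by fun_prop)),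
    MeasureTheory.integral_sub (hint (by fun_prop)) (hint (by fun_prop)),
    MeasureTheory.integral_const_mul, MeasureTheory.integral_const_mul] at h
  linarith

lemma mul_integral_mul_one_sub_sq_tiltedGegenbauer_le :
    κ * ∫ u, u * (1 - u ^ 2) ∂tiltedGegenbauer a κ ≤
      κ * ((∫ u, u ∂tiltedGegenbauer a κ) * ∫ u, 1 - u ^ 2 ∂tiltedGegenbauer a κ) := by
  have := isProbabilityMeasure_tiltedGegenbauer ha κ
  have hint {f : ℝ → ℝ} (hf : Continuous f) := integrable_tiltedGegenbauer ha κ hf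
  have hcor : κ * ((∫ u, u ∂tiltedGegenbauer a κ) * ∫ u, u ^ 2 ∂tiltedGegenbauer a κ) ≤
      κ * ∫ u, u ^ 3 ∂tiltedGegenbauer a κ :=
    mul_integral_mul_integral_sq_tilted_le (by simp [integrableExpSet_gegenbauerMeasure ha])
  have hsq : ∫ u, 1 - u ^ 2 ∂tiltedGegenbauer a κ = 1 - ∫ u, u ^ 2 ∂tiltedGegenbauer a κ := by
    rw [MeasureTheory.integral_sub (hint (by fun_prop)) (hint (by fun_prop))]
    simp
  have hcube : ∫ u, u * (1 - u ^ 2) ∂tiltedGegenbauer a κ =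
      ∫ u, u ∂tiltedGegenbauer a κ - ∫ u, u ^ 3 ∂tiltedGegenbauer a κ := by
    rw [← MeasureTheory.integral_sub (hint (by fun_prop)) (hint (by fun_prop))]
    congr with u
    ring
  rw [hsq, hcube]
  linarith

lemma mul_integral_one_sub_sq_sq_tiltedGegenbauer_le :
    (a + 1) * ∫ u, (1 - u ^ 2) ^ 2 ∂tiltedGegenbauer a κ ≤
      (a + 2) * (∫ u, 1 - u ^ 2 ∂tiltedGegenbauer a κ) ^ 2 := by
  rcases eq_or_ne κ 0 with rfl | hκ
  · have hV := integral_one_sub_sq_tiltedGegenbauer_zero ha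
    have hQ := integral_one_sub_sq_sq_tiltedGegenbauer_zero ha
    set V := ∫ u, 1 - u ^ 2 ∂tiltedGegenbauer a 0
    set Q := ∫ u, (1 - u ^ 2) ^ 2 ∂tiltedGegenbauer a 0
    refine le_of_mul_le_mul_left ?_ (by linarith : 0 < 2 * a + 5)
    calc
      (2 * a + 5) * ((a + 1) * Q) = (a + 2) * (2 * (a + 1)) * V := by
        linear_combination (a + 1) * hQ
      _ = (2 * a + 3) * ((a + 2) * V ^ 2) := by rw [← hV]; ring
      _ ≤ (2 * a + 5) * ((a + 2) * V ^ 2) := by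
        have : 0 ≤ a + 2 := by linarith
        gcongr
        norm_num
  · have hV := mul_integral_one_sub_sq_tiltedGegenbauer ha κ
    have hQ := mul_integral_one_sub_sq_sq_tiltedGegenbauer ha κ
    have hcor := mul_integral_mul_one_sub_sq_tiltedGegenbauer_le ha κ
    set M := ∫ u, u ∂tiltedGegenbauer a κ
    set V := ∫ u, 1 - u ^ 2 ∂tiltedGegenbauer a κ
    set Q := ∫ u, (1 - u ^ 2) ^ 2 ∂tiltedGegenbauer a κ
    set R := ∫ u, u * (1 - u ^ 2) ∂tiltedGegenbauer a κ
    refine le_of_mul_le_mul_left ?_ (by positivity : 0 < κ ^ 2)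
    calc
      κ ^ 2 * ((a + 1) * Q) = 2 * (a + 1) * (a + 2) * (κ * R) := by
        linear_combination κ * (a + 1) * hQ
      _ ≤ 2 * (a + 1) * (a + 2) * (κ * (M * V)) := by
        have : 0 ≤ 2 * (a + 1) * (a + 2) := by nlinarith
        gcongr
      _ = κ ^ 2 * ((a + 2) * V ^ 2) := by linear_combination -κ * (a + 2) * V * hV

lemma mul_variance_one_sub_sq_tiltedGegenbauer_le :
    (a + 1) * Var[fun u => 1 - u ^ 2; tiltedGegenbauer a κ] ≤
      (∫ u, 1 - u ^ 2 ∂tiltedGegenbauer a κ) ^ 2 := by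
  have := isProbabilityMeasure_tiltedGegenbauer ha κ
  have h := mul_integral_one_sub_sq_sq_tiltedGegenbauer_le ha κ
  rw [variance_eq_sub (memLp_two_tiltedGegenbauer ha κ (by fun_prop))]
  simp only [Pi.pow_apply]
  linarith

lemma integral_one_sub_sq_tiltedGegenbauer_pos :
    0 < ∫ u, 1 - u ^ 2 ∂tiltedGegenbauer a κ := by
  have := isProbabilityMeasure_tiltedGegenbauer ha κ
  have hpos : ∀ᵐ u ∂tiltedGegenbauer a κ, 0 < 1 - u ^ 2 :=
    (tilted_absolutelyContinuous _ _).ae_le <| (ae_mem_Ioo_gegenbauerMeasure a).mono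
      fun u hu => by nlinarith [hu.1, hu.2]
  refine (integral_nonneg_of_ae (hpos.mono fun u hu => hu.le)).lt_of_ne' fun h => ?_
  have hzero := (integral_eq_zero_iff_of_nonneg_ae (hpos.mono fun u hu => hu.le)
    (integrable_tiltedGegenbauer ha κ (by fun_prop))).1 h
  obtain ⟨u, hu, hu'⟩ := (hpos.and hzero).exists
  exact hu.ne' hu'

end TiltedGegenbauer

section FvML

open ProbabilityTheory

lemma neg_one_lt_sub_three_div_two {p : ℕ} (hp : 2 ≤ p) : -1 < ((p : ℝ) - 3) / 2 := by
  have : (2 : ℝ) ≤ p := by exact_mod_cast hp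
  linarith

lemma f2_eq_integral_tiltedGegenbauer {p : ℕ} (hp : 2 ≤ p) (κ : ℝ) :
    f2 p κ = ∫ u, 1 - u ^ 2 ∂tiltedGegenbauer (((p : ℝ) - 3) / 2) κ := by
  have ha := neg_one_lt_sub_three_div_two hp
  have := isProbabilityMeasure_tiltedGegenbauer ha κ
  have hm (ℓ : ℕ) : mInt p κ ℓ =
      ∫ u, Real.exp (κ * u) * u ^ ℓ ∂gegenbauerMeasure (((p : ℝ) - 3) / 2) := by
    rw [integral_gegenbauerMeasure, mInt]
    congr with u
    ring
  have he2 : e2 p κ = ∫ u, u ^ 2 ∂tiltedGegenbauer (((p : ℝ) - 3) / 2) κ := by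
    rw [e2, hm, hm, tiltedGegenbauer, integral_tilted, ← MeasureTheory.integral_div]
    simp [div_mul_eq_mul_div]
  rw [f2, he2, MeasureTheory.integral_sub (integrable_tiltedGegenbauer ha κ (by fun_prop))
    (integrable_tiltedGegenbauer ha κ (by fun_prop))]
  simp

lemma f2_pos {p : ℕ} (hp : 2 ≤ p) (κ : ℝ) : 0 < f2 p κ :=
  (integral_one_sub_sq_tiltedGegenbauer_pos (neg_one_lt_sub_three_div_two hp) κ).trans_eq
    (f2_eq_integral_tiltedGegenbauer hp κ).symm

variable {p : ℕ} (hp : 2 ≤ p) {θ : EuclideanSpace ℝ (Fin p)} (hθ : ‖θ‖ = 1) (κ : ℝ)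
include hp hθ

lemma measurePreserving_inner_fvml :
    MeasurePreserving (fun x : sphere (0 : EuclideanSpace ℝ (Fin p)) 1 =>
      ⟪(x : EuclideanSpace ℝ (Fin p)), θ⟫) (fvml p θ κ)
      (tiltedGegenbauer (((p : ℝ) - 3) / 2) κ) := by
  refine ⟨by fun_prop, ?_⟩
  have hfin : Module.finrank ℝ (EuclideanSpace ℝ (Fin p)) = p := finrank_euclideanSpace_fin
  have hmap := map_inner_toSphere (hfin.symm ▸ hp) hθ
  rw [hfin] at hmap
  have hmass := toSphere_orthogonal_span_singleton_univ_ne_zero (hfin.symm ▸ hp) θ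
  calc
    _ = ((sphereSurface p).tilted ((κ * ·) ∘ fun x : sphere (0 : EuclideanSpace ℝ (Fin p)) 1 =>
          ⟪(x : EuclideanSpace ℝ (Fin p)), θ⟫)).map _ := rfl
    _ = _ := by
      rw [map_tilted_comp (by fun_prop) (by fun_prop), sphereSurface, hmap,
        smul_tilted _ hmass (measure_ne_top _ _), tiltedGegenbauer]

lemma isProbabilityMeasure_fvml : IsProbabilityMeasure (fvml p θ κ) := by
  have := isProbabilityMeasure_tiltedGegenbauer (neg_one_lt_sub_three_div_two hp) κ
  have hmp := measurePreserving_inner_fvml hp hθ κ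
  exact (Measure.isProbabilityMeasure_map_iff hmp.measurable.aemeasurable).1
    (hmp.map_eq.symm ▸ this)

lemma memLp_one_sub_inner_sq_fvml :
    MemLp (fun x : sphere (0 : EuclideanSpace ℝ (Fin p)) 1 =>
      1 - ⟪(x : EuclideanSpace ℝ (Fin p)), θ⟫ ^ 2) 2 (fvml p θ κ) :=
  (memLp_two_tiltedGegenbauer (neg_one_lt_sub_three_div_two hp) κ (f := fun u => 1 - u ^ 2)
    (by fun_prop)).comp_measurePreserving (measurePreserving_inner_fvml hp hθ κ)

lemma integral_one_sub_inner_sq_fvml :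
    ∫ x : sphere (0 : EuclideanSpace ℝ (Fin p)) 1,
      1 - ⟪(x : EuclideanSpace ℝ (Fin p)), θ⟫ ^ 2 ∂fvml p θ κ = f2 p κ := by
  have hmp := measurePreserving_inner_fvml hp hθ κ
  rw [f2_eq_integral_tiltedGegenbauer hp, ← hmp.map_eq,
    integral_map hmp.measurable.aemeasurable (by fun_prop)]

lemma mul_variance_one_sub_inner_sq_fvml_le :
    ((p : ℝ) - 1) * Var[fun x : sphere (0 : EuclideanSpace ℝ (Fin p)) 1 =>
      1 - ⟪(x : EuclideanSpace ℝ (Fin p)), θ⟫ ^ 2; fvml p θ κ] ≤ 2 * f2 p κ ^ 2 := by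
  have h := mul_variance_one_sub_sq_tiltedGegenbauer_le (neg_one_lt_sub_three_div_two hp) κ
  rw [← f2_eq_integral_tiltedGegenbauer hp,
    ← (measurePreserving_inner_fvml hp hθ κ).variance_fun_comp (by fun_prop)] at h
  linarith

lemma mul_integral_sum_div_f2_sub_one_sq_pi_fvml_le {n : ℕ} (hn : n ≠ 0) :
    (p : ℝ) * ∫ x : Fin n → sphere (0 : EuclideanSpace ℝ (Fin p)) 1,
      ((∑ i, (1 - ⟪(x i : EuclideanSpace ℝ (Fin p)), θ⟫ ^ 2)) / (n * f2 p κ) - 1) ^ 2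
        ∂(Measure.pi fun _ => fvml p θ κ) ≤ 4 / n := by
  have := isProbabilityMeasure_fvml hp hθ κ
  let V (x : sphere (0 : EuclideanSpace ℝ (Fin p)) 1) : ℝ :=
    1 - ⟪(x : EuclideanSpace ℝ (Fin p)), θ⟫ ^ 2
  have hmean : ∫ x, V x ∂fvml p θ κ = f2 p κ := integral_one_sub_inner_sq_fvml hp hθ κ
  have hf2 : 0 < f2 p κ := f2_pos hp κ
  have hmse := integral_sum_div_sub_one_sq_pi (memLp_one_sub_inner_sq_fvml hp hθ κ)
    (hmean ▸ hf2.ne') hn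
  rw [hmean] at hmse
  have hvar : p * Var[V; fvml p θ κ] ≤ 4 * f2 p κ ^ 2 := by
    have hp' : (p : ℝ) ≤ 2 * (p - 1) := by linarith [show (2 : ℝ) ≤ p by exact_mod_cast hp]
    calc
      _ ≤ 2 * (p - 1) * Var[V; fvml p θ κ] :=
        mul_le_mul_of_nonneg_right hp' (variance_nonneg _ _)
      _ ≤ _ := by linarith [mul_variance_one_sub_inner_sq_fvml_le hp hθ κ]
  calc
    _ = p * (Var[V; fvml p θ κ] / (n * f2 p κ ^ 2)) := congrArg _ hmse
    _ = p * Var[V; fvml p θ κ] / (n * f2 p κ ^ 2) := (mul_div_assoc _ _ _).symm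
    _ ≤ 4 * f2 p κ ^ 2 / (n * f2 p κ ^ 2) := by gcongr
    _ = 4 / n := mul_div_mul_right _ _ (by positivity)

end FvML

theorem Ln_to_one_in_quadratic_mean_general (p : ℕ → ℕ) (hp2 : ∀ n, 2 ≤ p n) (κ : ℕ → ℝ)
    (θ₀ : (n : ℕ) → EuclideanSpace ℝ (Fin (p n))) (hθ₀ : ∀ n, ‖θ₀ n‖ = 1) :
    Tendsto
      (fun n : ℕ => (p n : ℝ) *
        ∫ x : Fin n → sphere (0 : EuclideanSpace ℝ (Fin (p n))) 1,
          ((∑ i, (1 - ⟪((x i : EuclideanSpace ℝ (Fin (p n)))), θ₀ n⟫ ^ 2)) /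
              ((n : ℝ) * f2 (p n) (κ n)) - 1) ^ 2
          ∂(Measure.pi fun _ : Fin n => fvml (p n) (θ₀ n) (κ n)))
      atTop (nhds 0) := by
  refine squeeze_zero' (.of_forall fun n => ?_) ((eventually_ne_atTop 0).mono fun n hn => ?_)
    (tendsto_const_div_atTop_nhds_zero_nat 4)
  · exact mul_nonneg (p n).cast_nonneg (MeasureTheory.integral_nonneg fun x => sq_nonneg _)
  · exact mul_integral_sum_div_f2_sub_one_sq_pi_fvml_le (hp2 n) (hθ₀ n) (κ n) hn

theorem Ln_to_one_in_quadratic_mean (p : ℕ → ℕ) (hp2 : ∀ n, 2 ≤ p n)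
    (hp : Tendsto (fun n => (p n : ℝ)) atTop atTop)
    (κ : ℕ → ℝ) (hκ : ∀ n, 0 < κ n)
    (θ₀ : (n : ℕ) → EuclideanSpace ℝ (Fin (p n))) (hθ₀ : ∀ n, ‖θ₀ n‖ = 1) :
    Tendsto
      (fun n : ℕ => (p n : ℝ) *
        ∫ x : Fin n → sphere (0 : EuclideanSpace ℝ (Fin (p n))) 1,
          ((∑ i, (1 - ⟪((x i : EuclideanSpace ℝ (Fin (p n)))), θ₀ n⟫ ^ 2)) /
              ((n : ℝ) * f2 (p n) (κ n)) - 1) ^ 2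
          ∂(Measure.pi fun _ : Fin n => fvml (p n) (θ₀ n) (κ n)))
      atTop (nhds 0) :=
  Ln_to_one_in_quadratic_mean_general p hp2 κ θ₀ hθ₀
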